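/- Let n ≥ 2 and define the most-confident collaboration strategy C : [0,1]^n → {0,1} by C(p_1, …, p_n) = round(p_{i*}), where i* is the smallest index i ∈ [n] maximizing |p_i − 1/2|. Then C is not reliable: there exists a collaboration setting S such that acc_C(S) < min_{i∈[n]} acc_i(S). -/

import Mathlib

open Finset

noncomputable def rnd (p : ℝ) : Bool := if (1/2 : ℝ) ≤ p then true else false

structure CollabSetting (n : ℕ) where
  X : Type
  [finX : Fintype X]
  D : X × Bool → ℝ
  D_nonneg : ∀ z, 0 ≤ D z
  D_sum_one : ∑ z : X × Bool, D z = 1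
  P : Fin n → X → ℝ
  P_mem : ∀ i x, 0 ≤ P i x ∧ P i x ≤ 1
  calibrated : ∀ (i : Fin n) (p : ℝ),
      0 < (∑ z : X × Bool, if P i z.1 = p then D z else 0) →
      (∑ z : X × Bool, if P i z.1 = p ∧ z.2 = true then D z else 0)
        = p * (∑ z : X × Bool, if P i z.1 = p then D z else 0)

attribute [instance] CollabSetting.finX

noncomputable def acc {n : ℕ} (S : CollabSetting n) (Yhat : S.X → Bool) : ℝ :=
  ∑ z : S.X × Bool, if Yhat z.1 = z.2 then S.D z else 0

noncomputable def accAgent {n : ℕ} (S : CollabSetting n) (i : Fin n) : ℝ :=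
  acc S (fun x => rnd (S.P i x))

noncomputable def accStrat {n : ℕ} (S : CollabSetting n) (C : (Fin n → ℝ) → Bool) : ℝ :=
  acc S (fun x => C (fun i => S.P i x))


/-- Point masses: the labels are deterministic, with total mass 11 before normalising. -/
noncomputable def exD (z : Fin 4 × Bool) : ℝ :=
  if z.2 then (![0, 0, 6/11, 1/11] : Fin 4 → ℝ) z.1 else (![2/11, 2/11, 0, 0] : Fin 4 → ℝ) z.1

noncomputable def exP {m : ℕ} (i : Fin (m + 2)) (x : Fin 4) : ℝ :=
  if i = 0 then (![3/4, 1/3, 3/4, 1/3] : Fin 4 → ℝ) x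
  else (![1/3, 3/4, 3/4, 1/3] : Fin 4 → ℝ) x

noncomputable def exS (m : ℕ) : CollabSetting (m + 2) where
  X := Fin 4
  D := exD
  D_nonneg := by
    rintro ⟨x, b⟩
    fin_cases x <;> cases b <;> norm_num [exD]
  D_sum_one := by
    simp only [Fintype.sum_prod_type, Fin.sum_univ_four, exD, Matrix.cons_val]
    norm_num
  P := exP
  P_mem := by
    intro i x
    by_cases hi : i = 0 <;> fin_cases x <;> norm_num [exP, hi]
  calibrated := by
    intro i p _
    by_cases h1 : (3/4 : ℝ) = p
    · subst h1
      by_cases hi : i = 0 <;>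
        simp only [Fintype.sum_prod_type, Fin.sum_univ_four, exD, exP, hi, Fintype.sum_bool, if_true, if_false, Matrix.cons_val] <;> norm_num [hi]
    · by_cases h2 : (1/3 : ℝ) = p
      · subst h2
        by_cases hi : i = 0 <;>
          simp only [Fintype.sum_prod_type, Fin.sum_univ_four, exD, exP, hi, Fintype.sum_bool, if_true, if_false, Matrix.cons_val] <;> norm_num [hi]
      · by_cases hi : i = 0 <;>
          simp [Fintype.sum_prod_type, Fin.sum_univ_four, exD, exP, hi, h1, h2] <;>
          simp_all

theorem rnd_hi : rnd (3/4) = true := by norm_num [rnd]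

theorem rnd_lo : rnd (1/3) = false := by norm_num [rnd]

theorem exS_accAgent (m : ℕ) (i : Fin (m + 2)) : accAgent (exS m) i = 8/11 := by
  change (∑ z : Fin 4 × Bool, if rnd (exP i z.1) = z.2 then exD z else 0) = 8/11
  by_cases hi : i = 0 <;>
    simp [Fintype.sum_prod_type, Fin.sum_univ_four, exD, exP, hi, rnd_hi, rnd_lo,
      -one_div] <;> norm_num [rnd]

/-- The most-confident collaboration strategy (deferring to the smallest
index maximizing the distance of the prediction from 1/2) is not reliable. -/
theorem stmt_15 (n : ℕ) (hn : 2 ≤ n) (C : (Fin n → ℝ) → Bool)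
    (hC : ∀ (p : Fin n → ℝ) (istar : Fin n),
      (∀ j, |p j - 1/2| ≤ |p istar - 1/2|) →
      (∀ j, j < istar → |p j - 1/2| < |p istar - 1/2|) →
      C p = rnd (p istar)) :
    ∃ S : CollabSetting n, accStrat S C < ⨅ i : Fin n, accAgent S i := by
  obtain ⟨m, rfl⟩ : ∃ m, n = m + 2 := ⟨n - 2, by omega⟩
  have a1 : |(3/4 : ℝ) - 1/2| = 1/4 := by rw [abs_of_nonneg] <;> norm_num
  have a2 : |(1/3 : ℝ) - 1/2| = 1/6 := by rw [abs_of_nonpos] <;> norm_num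
  have c0 : C (fun i => exP i 0) = true := by
    rw [hC _ 0]
    · simp [exP, rnd_hi]
    · intro j
      by_cases hj : j = 0
      · simp [hj]
      · simp only [exP, hj, if_true, if_false, Matrix.cons_val]
        rw [a1, a2]; norm_num
    · intro j hj
      exact absurd hj (Fin.not_lt_zero j)
  have c1 : C (fun i => exP i 1) = true := by
    rw [hC _ 1]
    · simp [exP, rnd_hi]
    · intro j
      by_cases hj : j = 0
      · simp only [exP, hj, if_true, one_ne_zero, if_false, Matrix.cons_val]
        rw [a1, a2]; norm_num
      · simp [exP, hj]
    · intro j hj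
      have hj : j = 0 := by
        apply Fin.ext
        have := Fin.lt_def.1 hj
        simpa using this
      simp only [exP, hj, if_true, one_ne_zero, if_false, Matrix.cons_val]
      rw [a1, a2]; norm_num
  have c2 : C (fun i => exP i 2) = true := by
    rw [hC _ 0]
    · simp [exP, rnd_hi]
    · intro j
      by_cases hj : j = 0 <;> simp [exP, hj]
    · intro j hj
      exact absurd hj (Fin.not_lt_zero j)
  have c3 : C (fun i => exP i 3) = false := by
    rw [hC _ 0]
    · simp only [exP, if_true, Matrix.cons_val]; exact rnd_lo
    · intro j
      by_cases hj : j = 0 <;> simp [exP, hj]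
    · intro j hj
      exact absurd hj (Fin.not_lt_zero j)
  refine ⟨exS m, ?_⟩
  have hs : accStrat (exS m) C = 6/11 := by
    change (∑ z : Fin 4 × Bool, if C (fun i => exP i z.1) = z.2 then exD z else 0) = 6/11
    simp [Fintype.sum_prod_type, Fin.sum_univ_four, c0, c1, c2, c3, exD]
  simp only [hs, exS_accAgent, ciInf_const]
  norm_num
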